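/- arXiv:2207.02034 — 2 statements merged into one kernel-verified Lean document; each statement's English description precedes it below -/
import Mathlib

section
/- Let R be a Hecke symmetry with parameter q such that j_q ≠ 0 for 2 ≤ j ≤ k, and let M be an N×N matrix with entries in a unital associative ℂ-algebra 𝒜 satisfying the Reflection Equation R M₁ R M₁ = M₁ R M₁ R. Then the R-skew-symmetrizer commutes with the chain of copies of M: A^(k) M_{1̄} M_{2̄} ⋯ M_{k̄} = M_{1̄} M_{2̄} ⋯ M_{k̄} A^(k), as N^k×N^k matrices over 𝒜. -/
open Matrix BigOperators

noncomputable section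

/-- An `N² × N²` complex matrix, viewed as an operator on `ℂ^N ⊗ ℂ^N`. -/
abbrev RMat (N : ℕ) := Matrix (Fin N × Fin N) (Fin N × Fin N) ℂ

/-- A matrix on the `k`-th tensor power of `ℂ^N`, with entries in `A`. -/
abbrev TMat (N k : ℕ) (A : Type _) := Matrix (Fin k → Fin N) (Fin k → Fin N) A

/-- The `q`-number `j_q = (q^j - q^{-j})/(q - q^{-1})`. -/
def qNum (q : ℂ) (j : ℕ) : ℂ := (q ^ j - q⁻¹ ^ j) / (q - q⁻¹)

/-- Embedding of an `N²×N²` matrix `R` into the `k`-th tensor power,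
acting in the (0-based) tensor factors `i` and `i+1`.  The paper's `R_i`
(1-based) is `embR k R (i-1)`. -/
def embR {N : ℕ} (k : ℕ) (R : RMat N) (i : ℕ) : TMat N k ℂ := fun f g =>
  if h : i + 1 < k then
    if ∀ j : Fin k, j.val ≠ i → j.val ≠ i + 1 → f j = g j then
      R (f ⟨i, Nat.lt_of_succ_lt h⟩, f ⟨i + 1, h⟩) (g ⟨i, Nat.lt_of_succ_lt h⟩, g ⟨i + 1, h⟩)
    else 0
  else (1 : TMat N k ℂ) f g

/-- `X ⊗ I^{⊗(k-1)}` : the first copy `X_{1̄}` of an `N×N` matrix over `A`. -/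
def emb1 {N : ℕ} (k : ℕ) {A : Type _} [Ring A] (X : Matrix (Fin N) (Fin N) A) :
    TMat N k A := fun f g =>
  if h : 0 < k then
    if ∀ j : Fin k, j.val ≠ 0 → f j = g j then X (f ⟨0, h⟩) (g ⟨0, h⟩) else 0
  else (1 : TMat N k A) f g

/-- Lift a complex matrix to a matrix over the `ℂ`-algebra `A`. -/
def liftC {N k : ℕ} (A : Type _) [Ring A] [Algebra ℂ A] (X : TMat N k ℂ) : TMat N k A :=
  X.map (algebraMap ℂ A)

/-- The copies `X_{1̄}, X_{2̄}, …` of `X` in the `k`-th tensor power: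
`copyX k R Rinv X i` is the paper's `X_{\overline{i+1}}`, i.e.
`X_{1̄} = X ⊗ I^{⊗(k-1)}` and `X_{\overline{i+1}} = R_i X_{ī} R_i⁻¹`. -/
def copyX {N : ℕ} (k : ℕ) (R Rinv : RMat N) {A : Type _} [Ring A] [Algebra ℂ A]
    (X : Matrix (Fin N) (Fin N) A) : ℕ → TMat N k A
  | 0 => emb1 k X
  | i + 1 => liftC A (embR k R i) * copyX k R Rinv X i * liftC A (embR k Rinv i)

/-- The `R`-skew-symmetrizers, on the ambient `k`-th tensor power:
`Asym k R q j` is `A^{(j)}` (acting in the first `j` factors). -/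
def Asym {N : ℕ} (k : ℕ) (R : RMat N) (q : ℂ) : ℕ → TMat N k ℂ
  | 0 => 1
  | 1 => 1
  | j + 2 =>
      (qNum q (j + 2))⁻¹ •
        (Asym k R q (j + 1) *
          ((q ^ (j + 1)) • (1 : TMat N k ℂ) - (qNum q (j + 1)) • embR k R j) *
          Asym k R q (j + 1))

/-- The `R`-symmetrizers, on the ambient `k`-th tensor power:
`Ssym k R q j` is `S^{(j)}` (acting in the first `j` factors). -/
def Ssym {N : ℕ} (k : ℕ) (R : RMat N) (q : ℂ) : ℕ → TMat N k ℂ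
  | 0 => 1
  | 1 => 1
  | j + 2 =>
      (qNum q (j + 2))⁻¹ •
        (Ssym k R q (j + 1) *
          ((q⁻¹ ^ (j + 1)) • (1 : TMat N k ℂ) + (qNum q (j + 1)) • embR k R j) *
          Ssym k R q (j + 1))

/-- The braid relation `R₁₂ R₂₃ R₁₂ = R₂₃ R₁₂ R₂₃` on `(ℂ^N)^{⊗3}`. -/
def IsBraiding {N : ℕ} (R : RMat N) : Prop :=
  embR 3 R 0 * embR 3 R 1 * embR 3 R 0 = embR 3 R 1 * embR 3 R 0 * embR 3 R 1

/-- The Hecke condition `(q·I − R)(q⁻¹·I + R) = 0`. -/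
def HeckeCond {N : ℕ} (R : RMat N) (q : ℂ) : Prop :=
  (q • (1 : RMat N) - R) * (q⁻¹ • (1 : RMat N) + R) = 0

/-- The Reflection Equation `R M₁ R M₁ = M₁ R M₁ R` (on `(ℂ^N)^{⊗2}`,
with entries in `A`). -/
def RERel {N : ℕ} (R : RMat N) {A : Type _} [Ring A] [Algebra ℂ A]
    (M : Matrix (Fin N) (Fin N) A) : Prop :=
  liftC A (embR 2 R 0) * emb1 2 M * liftC A (embR 2 R 0) * emb1 2 M
    = emb1 2 M * liftC A (embR 2 R 0) * emb1 2 M * liftC A (embR 2 R 0)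

/-- The relation `R⁻¹ D₁ R⁻¹ D₁ = D₁ R⁻¹ D₁ R⁻¹` on the matrix `D`,
where `Rinv = R⁻¹`. -/
def DDRel {N : ℕ} (Rinv : RMat N) {A : Type _} [Ring A] [Algebra ℂ A]
    (D : Matrix (Fin N) (Fin N) A) : Prop :=
  liftC A (embR 2 Rinv 0) * emb1 2 D * liftC A (embR 2 Rinv 0) * emb1 2 D
    = emb1 2 D * liftC A (embR 2 Rinv 0) * emb1 2 D * liftC A (embR 2 Rinv 0)

/-- The permutation relations `D₁ R M₁ = R M₁ R⁻¹ D₁ R⁻¹ + I`, where `Rinv = R⁻¹`. -/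
def PermRel {N : ℕ} (R Rinv : RMat N) {A : Type _} [Ring A] [Algebra ℂ A]
    (M D : Matrix (Fin N) (Fin N) A) : Prop :=
  emb1 2 D * liftC A (embR 2 R 0) * emb1 2 M
    = liftC A (embR 2 R 0) * emb1 2 M * liftC A (embR 2 Rinv 0) * emb1 2 D *
        liftC A (embR 2 Rinv 0) + 1

/-- `Ψ` is the skew-inverse of `R`:  `Σ_{j,b} R^{ij}_{ab} Ψ^{bc}_{jd} = δ^i_d δ^c_a`. -/
def SkewInv {N : ℕ} (R Ψ : RMat N) : Prop :=
  ∀ i a c d : Fin N,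
    (∑ j : Fin N, ∑ b : Fin N, R (i, j) (a, b) * Ψ (b, c) (j, d))
      = if i = d ∧ c = a then 1 else 0

/-- The matrix `C`, `C^c_d = Σ_i Ψ^{ic}_{id}`. -/
def Cmat {N : ℕ} (Ψ : RMat N) : Matrix (Fin N) (Fin N) ℂ :=
  fun c d => ∑ i : Fin N, Ψ (i, c) (i, d)

/-- The `R`-trace over all `k` tensor factors: `⟨X⟩_{1…k} = Tr(C^{⊗k} X)`. -/
def rTr {N k : ℕ} {A : Type _} [Ring A] [Algebra ℂ A] (C : Matrix (Fin N) (Fin N) ℂ)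
    (X : TMat N k A) : A :=
  ∑ f : Fin k → Fin N, ∑ g : Fin k → Fin N, (∏ j : Fin k, C (f j) (g j)) • X g f

/-- The chain `X_{1̄} X_{2̄} ⋯ X_{n̄}`. -/
def upChain {N : ℕ} (k : ℕ) (R Rinv : RMat N) {A : Type _} [Ring A] [Algebra ℂ A]
    (X : Matrix (Fin N) (Fin N) A) (n : ℕ) : TMat N k A :=
  ((List.range n).map (copyX k R Rinv X)).prod

/-- The reversed chain `X_{n̄} X_{\overline{n-1}} ⋯ X_{1̄}`. -/
def downChain {N : ℕ} (k : ℕ) (R Rinv : RMat N) {A : Type _} [Ring A] [Algebra ℂ A]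
    (X : Matrix (Fin N) (Fin N) A) (n : ℕ) : TMat N k A :=
  ((List.range n).reverse.map (copyX k R Rinv X)).prod

/-- The Capelli chain `L_{1̄}(L_{2̄} + q·1_q I)(L_{3̄} + q²·2_q I) ⋯ (L_{n̄} + q^{n-1}·(n-1)_q I)`
(note `0_q = 0`). -/
def capChainA {N : ℕ} (k : ℕ) (R Rinv : RMat N) (q : ℂ) {A : Type _} [Ring A] [Algebra ℂ A]
    (L : Matrix (Fin N) (Fin N) A) (n : ℕ) : TMat N k A :=
  ((List.range n).map
    (fun i => copyX k R Rinv L i + ((q ^ i) * qNum q i) • (1 : TMat N k A))).prod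

/-- The symmetric Capelli chain
`L_{1̄}(L_{2̄} - q⁻¹·1_q I) ⋯ (L_{n̄} - q^{-(n-1)}·(n-1)_q I)`. -/
def capChainS {N : ℕ} (k : ℕ) (R Rinv : RMat N) (q : ℂ) {A : Type _} [Ring A] [Algebra ℂ A]
    (L : Matrix (Fin N) (Fin N) A) (n : ℕ) : TMat N k A :=
  ((List.range n).map
    (fun i => copyX k R Rinv L i - ((q⁻¹ ^ i) * qNum q i) • (1 : TMat N k A))).prod

/-- The descending chain `R_{a→b} = R_a R_{a-1} ⋯ R_b` (1-based indices;
identity when `b > a`). -/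
def rChainDesc {N : ℕ} (k : ℕ) (R : RMat N) (a b : ℕ) : TMat N k ℂ :=
  ((List.range' b (a + 1 - b)).reverse.map (fun j => embR k R (j - 1))).prod

/-- The ascending chain `R_{b→a} = R_b R_{b+1} ⋯ R_a` (1-based indices;
identity when `b > a`). -/
def rChainAsc {N : ℕ} (k : ℕ) (R : RMat N) (b a : ℕ) : TMat N k ℂ :=
  ((List.range' b (a + 1 - b)).map (fun j => embR k R (j - 1))).prod

section Abstract12

variable {B : Type*} [Ring B]

/-- Inductive step of the reflection equation for the copies. -/
theorem re_step12 (a b : Bˣ) (x : B) (hbr : a * b * a = b * a * b) (hc : b * x = x * b)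
    (h : a * x * a * x = x * a * x * a) :
    (b : B) * (a * x * (a⁻¹ : Bˣ)) * b * (a * x * (a⁻¹ : Bˣ))
      = (a * x * (a⁻¹ : Bˣ)) * b * (a * x * (a⁻¹ : Bˣ)) * b := by
  have h1 : a⁻¹ * b * a = b * a * b⁻¹ := by
    rw [mul_assoc, inv_mul_eq_iff_eq_mul, eq_comm, ← mul_assoc, mul_inv_eq_iff_eq_mul,
      ← mul_assoc, hbr]
  have h2 : b⁻¹ * a⁻¹ * b = a * b⁻¹ * a⁻¹ := by
    rw [eq_mul_inv_iff_mul_eq, eq_mul_inv_iff_mul_eq, ← _root_.mul_inv_rev, mul_assoc, mul_assoc,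
      inv_mul_eq_iff_eq_mul, ← mul_assoc, ← hbr]
  have h1' : ((a⁻¹ : Bˣ) : B) * b * a = b * a * (b⁻¹ : Bˣ) := by exact_mod_cast congrArg Units.val h1
  have h2' : ((b⁻¹ : Bˣ) : B) * (a⁻¹ : Bˣ) * b = a * (b⁻¹ : Bˣ) * (a⁻¹ : Bˣ) := by
    exact_mod_cast congrArg Units.val h2
  have hbr' : (a : B) * b * a = b * a * b := by exact_mod_cast congrArg Units.val hbr
  have hc' : ((b⁻¹ : Bˣ) : B) * x = x * (b⁻¹ : Bˣ) := by
    have : Commute (b : B) x := hc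
    exact this.units_inv_left
  generalize ((a⁻¹ : Bˣ) : B) = a' at *
  generalize ((b⁻¹ : Bˣ) : B) = b' at *
  generalize (a : B) = a at *
  generalize (b : B) = b at *
  calc b * (a * x * a') * b * (a * x * a') = b * a * x * (a' * b * a) * x * a' := by
        simp only [mul_assoc]
    _ = b * a * (x * b) * a * (b' * x) * a' := by rw [h1']; simp only [mul_assoc]
    _ = (b * a * b) * x * a * x * b' * a' := by rw [← hc, hc']; simp only [mul_assoc]
    _ = a * b * (a * x * a * x) * b' * a' := by rw [← hbr']; simp only [mul_assoc]
    _ = a * (b * x) * a * x * (a * b' * a') := by rw [h]; simp only [mul_assoc]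
    _ = a * x * b * a * (x * b') * a' * b := by rw [← h2', hc]; simp only [mul_assoc]
    _ = a * x * (b * a * b') * x * a' * b := by rw [← hc']; simp only [mul_assoc]
    _ = _ := by rw [← h1']; simp only [mul_assoc]

/-- Two steps higher, the generator commutes again with the copy. -/
theorem comm_step12 (a b : Bˣ) (x : B) (hbr : a * b * a = b * a * b) (hc : b * x = x * b) :
    (a : B) * (b * (a * x * (a⁻¹ : Bˣ)) * (b⁻¹ : Bˣ))
      = (b * (a * x * (a⁻¹ : Bˣ)) * (b⁻¹ : Bˣ)) * a := by
  have h2 : b * a⁻¹ * b⁻¹ = a⁻¹ * b⁻¹ * a := by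
    rw [mul_inv_eq_iff_eq_mul, mul_inv_eq_iff_eq_mul, mul_assoc, mul_assoc, ← _root_.mul_inv_rev,
      eq_inv_mul_iff_mul_eq, ← mul_assoc, ← hbr, mul_assoc]
  have h2' : (b : B) * (a⁻¹ : Bˣ) * (b⁻¹ : Bˣ) = (a⁻¹ : Bˣ) * (b⁻¹ : Bˣ) * a := by
    exact_mod_cast congrArg Units.val h2
  have hbr' : (a : B) * b * a = b * a * b := by exact_mod_cast congrArg Units.val hbr
  generalize ((a⁻¹ : Bˣ) : B) = a' at *
  generalize ((b⁻¹ : Bˣ) : B) = b' at *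
  generalize (a : B) = a at *
  generalize (b : B) = b at *
  calc a * (b * (a * x * a') * b') = (a * b * a) * x * a' * b' := by simp only [mul_assoc]
    _ = b * a * (b * x) * a' * b' := by rw [hbr']; simp only [mul_assoc]
    _ = b * a * x * (b * a' * b') := by rw [hc]; simp only [mul_assoc]
    _ = _ := by rw [h2']; simp only [mul_assoc]

/-- The abstract statement: generators commute with the chain. -/
theorem chain_comm12 (k : ℕ) (r : ℕ → Bˣ) (x : ℕ → B)
    (hx : ∀ i, i + 1 < k → x (i + 1) = r i * x i * ((r i)⁻¹ : Bˣ))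
    (hbr : ∀ i, i + 2 < k → r i * r (i + 1) * r i = r (i + 1) * r i * r (i + 1))
    (hfar : ∀ i j, i + 1 < j → j + 1 < k → Commute (r i : B) (r j))
    (h0 : ∀ j, 0 < j → j + 1 < k → Commute (r j : B) (x 0))
    (hRE : 1 < k → r 0 * x 0 * r 0 * x 0 = x 0 * r 0 * x 0 * r 0) :
    ∀ n, n ≤ k → ∀ i, i + 1 < n → Commute (r i : B) ((List.range n).map x).prod := by
  have hA : ∀ i j, i < j → j + 1 < k → Commute (r j : B) (x i) := by
    intro i
    induction i with
    | zero => exact h0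
    | succ i ih =>
      intro j hj hk
      rw [hx i (by omega)]
      have h1 := (hfar i j hj hk).symm
      exact (h1.mul_right (ih j (by omega) hk)).mul_right h1.units_inv_right
  have hB : ∀ d j, j + 2 + d < k → Commute (r j : B) (x (j + 2 + d)) := by
    intro d
    induction d with
    | zero =>
      intro j hj
      have h1 := hx (j + 1) (by omega)
      rw [hx j (by omega)] at h1
      change Commute _ (x (j + 1 + 1))
      rw [h1]
      exact comm_step12 _ _ _ (hbr j (by omega)) (hA j (j + 1) (by omega) (by omega))
    | succ d ih =>
      intro j hj
      rw [← add_assoc, hx (j + 2 + d) (by omega)]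
      have h1 := hfar j (j + 2 + d) (by omega) (by omega)
      exact (h1.mul_right (ih j (by omega))).mul_right h1.units_inv_right
  have hR : ∀ i, i + 1 < k → r i * x i * r i * x i = x i * r i * x i * r i := by
    intro i
    induction i with
    | zero => exact hRE
    | succ i ih =>
      intro hi
      rw [hx i (by omega)]
      exact re_step12 _ _ _ (hbr i (by omega)) (hA i (i + 1) (by omega) (by omega))
        (ih (by omega))
  have hC : ∀ i, i + 1 < k → Commute (r i : B) (x i * x (i + 1)) := by
    intro i hi
    rw [hx i hi]
    have := hR i hi
    change (r i : B) * (x i * (r i * x i * ((r i)⁻¹ : Bˣ))) = (x i * (r i * x i * ((r i)⁻¹ : Bˣ))) * r i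
    calc (r i : B) * (x i * (r i * x i * ((r i)⁻¹ : Bˣ)))
        = (r i * x i * r i * x i) * ((r i)⁻¹ : Bˣ) := by simp only [mul_assoc]
      _ = _ := by rw [this]; simp only [mul_assoc, Units.mul_inv, Units.inv_mul]
  have hD : ∀ n j, n ≤ j → j + 1 < k → Commute (r j : B) ((List.range n).map x).prod := by
    intro n j hn hj
    apply Commute.list_prod_right
    intro y hy
    obtain ⟨i, hi, rfl⟩ := List.mem_map.1 hy
    exact hA i j (by have := List.mem_range.1 hi; omega) hj
  intro n
  induction n with
  | zero => intro _ i hi; omega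
  | succ n ih =>
    intro hn i hi
    rcases Nat.lt_or_ge (i + 1) n with h | h
    · rw [List.range_succ, List.map_append, List.prod_append]
      refine (ih (by omega) i h).mul_right ?_
      have := hB (n - i - 2) i (by omega)
      rw [show i + 2 + (n - i - 2) = n by omega] at this
      simpa using this
    · obtain rfl : n = i + 1 := by omega
      rw [List.range_succ, List.range_succ]
      simp only [List.map_append, List.prod_append, List.map_cons, List.map_nil,
        List.prod_cons, List.prod_nil, mul_one, mul_assoc]
      exact (hD i i le_rfl (by omega)).mul_right (hC i (by omega))

end Abstract12

section Embed12

open scoped Classical in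
/-- Embedding of operators on `ι`-indexed tensor factors along an injection `e : ι → κ`. -/
def embG {ι κ : Type*} {N : ℕ} {A : Type*} [Ring A] (e : ι → κ)
    (X : Matrix (ι → Fin N) (ι → Fin N) A) : Matrix (κ → Fin N) (κ → Fin N) A :=
  fun f g => if ∀ j, (∀ t, e t ≠ j) → f j = g j then X (f ∘ e) (g ∘ e) else 0

variable {ι ι' κ : Type*} [Fintype ι] [Fintype ι'] [Fintype κ] [DecidableEq ι] [DecidableEq ι']
  [DecidableEq κ] {N : ℕ} {A : Type*} [Ring A]

theorem embG_mul (e : ι → κ) (he : Function.Injective e)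
    (X Y : Matrix (ι → Fin N) (ι → Fin N) A) : embG e (X * Y) = embG e X * embG e Y := by
  classical
  ext f h
  rw [Matrix.mul_apply]
  by_cases hfh : ∀ j, (∀ t, e t ≠ j) → f j = h j
  · rw [embG, if_pos hfh, Matrix.mul_apply]
    refine Finset.sum_of_injOn (fun u => Function.extend e u f) ?_ ?_ ?_ ?_
    · intro u _ v _ huv
      funext t
      have := congrFun huv (e t)
      simpa [he.extend_apply] using this
    · intro _ _; simp
    · intro g _ hg
      rw [embG, if_neg, zero_mul]
      intro hfg
      apply hg
      refine ⟨g ∘ e, by simp, ?_⟩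
      funext j
      by_cases hj : ∃ t, e t = j
      · obtain ⟨t, rfl⟩ := hj
        simp [he.extend_apply]
      · simp only [Function.extend_apply' _ _ _ hj]
        exact hfg j (fun t ht => hj ⟨t, ht⟩)
    · intro u _
      have h1 : Function.extend e u f ∘ e = u := by funext t; simp [he.extend_apply]
      have h2 : ∀ j, (∀ t, e t ≠ j) → Function.extend e u f j = f j := fun j hj =>
        Function.extend_apply' _ _ _ (fun ⟨t, ht⟩ => hj t ht)
      simp only [embG]
      rw [if_pos (fun j hj => (h2 j hj).symm), if_pos (fun j hj => (h2 j hj).trans (hfh j hj)), h1]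
  · rw [embG, if_neg hfh, Finset.sum_eq_zero]
    intro g _
    simp only [embG]
    split_ifs with h1 h2
    · exact absurd (fun j hj => (h1 j hj).trans (h2 j hj)) hfh
    all_goals simp

theorem embG_one (e : ι → κ) : embG e (1 : Matrix (ι → Fin N) (ι → Fin N) A) = 1 := by
  classical
  ext f g
  rw [embG]
  by_cases hfg : f = g
  · subst hfg; simp
  · rw [Matrix.one_apply_ne hfg]
    split_ifs with h
    · apply Matrix.one_apply_ne
      intro h'
      apply hfg
      funext j
      by_cases hj : ∃ t, e t = j
      · obtain ⟨t, rfl⟩ := hj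
        exact congrFun h' t
      · exact h j (fun t ht => hj ⟨t, ht⟩)
    · rfl

open scoped Classical in
theorem embG_mul_disj (e : ι → κ) (e' : ι' → κ) (hd : ∀ t t', e t ≠ e' t')
    (X : Matrix (ι → Fin N) (ι → Fin N) A) (Y : Matrix (ι' → Fin N) (ι' → Fin N) A)
    (f h : κ → Fin N) :
    (embG e X * embG e' Y) f h =
      if ∀ j, (∀ t, e t ≠ j) → (∀ t, e' t ≠ j) → f j = h j then
        X (f ∘ e) (h ∘ e) * Y (f ∘ e') (h ∘ e') else 0 := by
  rw [Matrix.mul_apply]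
  split_ifs with hfh
  · let g0 : κ → Fin N := fun j => if ∃ t, e t = j then h j else f j
    have hg1 : g0 ∘ e = h ∘ e := by funext t; simp [g0]
    have hg2 : g0 ∘ e' = f ∘ e' := by
      funext t
      simp only [g0, Function.comp]
      rw [if_neg]
      rintro ⟨s, hs⟩
      exact hd s t hs
    rw [Finset.sum_eq_single g0]
    · simp only [embG]
      rw [if_pos, if_pos, hg1, hg2]
      · intro j hj
        simp only [g0]
        split_ifs with hh
        · rfl
        · exact hfh j (fun t ht => hh ⟨t, ht⟩) hj
      · intro j hj
        simp only [g0]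
        rw [if_neg]
        rintro ⟨t, ht⟩
        exact hj t ht
    · intro g _ hg
      simp only [embG]
      split_ifs with h1 h2
      · exfalso
        apply hg
        funext j
        simp only [g0]
        split_ifs with hh
        · obtain ⟨t, rfl⟩ := hh
          exact h2 _ (fun t' => (hd t t').symm)
        · exact (h1 j (fun t ht => hh ⟨t, ht⟩)).symm
      all_goals simp
    · simp
  · apply Finset.sum_eq_zero
    intro g _
    simp only [embG]
    split_ifs with h1 h2
    · exact absurd (fun j hj hj' => (h1 j hj).trans (h2 j hj')) hfh
    all_goals simp

theorem embG_commute (e : ι → κ) (e' : ι' → κ) (hd : ∀ t t', e t ≠ e' t')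
    (X : Matrix (ι → Fin N) (ι → Fin N) A) (Y : Matrix (ι' → Fin N) (ι' → Fin N) A)
    (hc : ∀ a b c d, Commute (X a b) (Y c d)) : Commute (embG e X) (embG e' Y) := by
  classical
  change _ * _ = _ * _
  ext f h
  rw [embG_mul_disj e e' hd, embG_mul_disj e' e (fun t t' => (hd t' t).symm)]
  simp only [(hc _ _ _ _).eq]
  congr 1
  apply propext
  exact ⟨fun H j a b => H j b a, fun H j a b => H j b a⟩

/-- The window embedding `Fin m → Fin k`, shifted by `i`. -/
def win12 (k i m : ℕ) (h : i + m ≤ k) : Fin m → Fin k := fun t => ⟨i + t, by omega⟩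

theorem win12_inj (k i m : ℕ) (h : i + m ≤ k) : Function.Injective (win12 k i m h) := by
  intro a b hab
  simp only [win12, Fin.mk.injEq] at hab
  exact Fin.ext (by omega)

theorem win12_off (k i m : ℕ) (h : i + m ≤ k) (j : Fin k) :
    (∀ t, win12 k i m h t ≠ j) ↔ (j.val < i ∨ i + m ≤ j.val) := by
  constructor
  · intro H
    by_contra hc
    exact H ⟨j.val - i, by omega⟩ (Fin.ext (by simp only [win12]; omega))
  · intro H t ht
    have := congrArg Fin.val ht
    simp only [win12] at this
    omega

theorem embR_eq_win (k i m l : ℕ) (h : i + m ≤ k) (hl : l + 1 < m) (R : RMat N) :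
    embR k R (i + l) = embG (win12 k i m h) (embR m R l) := by
  classical
  ext f g
  simp only [embR, embG, win12_off]
  rw [dif_pos (by omega)]
  simp only [dif_pos hl]
  by_cases h1 : ∀ j : Fin k, (j.val < i ∨ i + m ≤ j.val) → f j = g j
  · rw [if_pos h1]
    congr 1
    apply propext
    constructor
    · intro H j hj hj'
      exact H _ (by simp only [win12]; omega) (by simp only [win12]; omega)
    · intro H j hj hj'
      by_cases hjj : j.val < i ∨ i + m ≤ j.val
      · exact h1 j hjj
      · have := H ⟨j.val - i, by omega⟩ (by simp only; omega) (by simp only; omega)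
        have e1 : win12 k i m h ⟨j.val - i, by omega⟩ = j :=
          Fin.ext (by simp only [win12]; omega)
        simpa only [Function.comp, e1] using this
  · rw [if_neg h1, if_neg]
    intro H
    exact h1 (fun j hj => H j (by omega) (by omega))

theorem emb1_eq_win (k m : ℕ) (h : 0 + m ≤ k) (hm : 0 < m) (X : Matrix (Fin N) (Fin N) A) :
    emb1 k X = embG (win12 k 0 m h) (emb1 m X) := by
  classical
  ext f g
  simp only [emb1, embG, win12_off]
  rw [dif_pos (by omega)]
  simp only [dif_pos hm]
  by_cases h1 : ∀ j : Fin k, (j.val < 0 ∨ 0 + m ≤ j.val) → f j = g j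
  · rw [if_pos h1]
    congr 1
    apply propext
    constructor
    · intro H j hj
      exact H _ (by simp only [win12]; omega)
    · intro H j hj
      by_cases hjj : j.val < 0 ∨ 0 + m ≤ j.val
      · exact h1 j hjj
      · have := H ⟨j.val, by omega⟩ hj
        have e1 : win12 k 0 m h ⟨j.val, by omega⟩ = j :=
          Fin.ext (by simp only [win12]; omega)
        simpa only [Function.comp, e1] using this
  · rw [if_neg h1, if_neg]
    intro H
    exact h1 (fun j hj => H j (by omega))

theorem embR2_mul (R S : RMat N) : embR 2 (R * S) 0 = embR 2 R 0 * embR 2 S 0 := by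
  have key : ∀ T : RMat N, embR 2 T 0 = T.submatrix (finTwoArrowEquiv (Fin N)) (finTwoArrowEquiv (Fin N)) := by
    intro T
    ext f g
    simp only [embR, Matrix.submatrix_apply]
    rw [dif_pos (by omega), if_pos]
    · rfl
    · intro j; omega
  rw [key, key, key, Matrix.submatrix_mul_equiv]

theorem embR2_one : embR 2 (1 : RMat N) 0 = 1 := by
  ext f g
  simp only [embR]
  rw [dif_pos (by omega), if_pos (by intro j; omega), Matrix.one_apply, Matrix.one_apply]
  congr 1
  simp only [Prod.mk.injEq, funext_iff, Fin.forall_fin_two]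
  rfl

theorem embR_mul_inv (k i : ℕ) (hi : i + 1 < k) (R S : RMat N) (h : R * S = 1) :
    embR k R i * embR k S i = 1 := by
  have h1 := embR_eq_win k i 2 0 (by omega) (by omega) R
  have h2 := embR_eq_win k i 2 0 (by omega) (by omega) S
  rw [add_zero] at h1 h2
  rw [h1, h2, ← embG_mul _ (win12_inj _ _ _ _), ← embR2_mul, h, embR2_one, embG_one]

theorem embR_braid (k i : ℕ) (hi : i + 2 < k) (R : RMat N) (h : IsBraiding R) :
    embR k R i * embR k R (i + 1) * embR k R i
      = embR k R (i + 1) * embR k R i * embR k R (i + 1) := by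
  have h1 := embR_eq_win k i 3 0 (by omega) (by omega) R
  have h2 := embR_eq_win k i 3 1 (by omega) (by omega) R
  rw [add_zero] at h1
  rw [h1, h2]
  simp only [← embG_mul _ (win12_inj _ _ _ _)]
  rw [h]

theorem embR_far (k i j : ℕ) (hij : i + 1 < j) (hj : j + 1 < k) (R : RMat N) :
    Commute (embR k R i) (embR k R j) := by
  have h1 := embR_eq_win k i 2 0 (by omega) (by omega) R
  have h2 := embR_eq_win k j 2 0 (by omega) (by omega) R
  rw [add_zero] at h1 h2
  rw [h1, h2]
  apply embG_commute
  · intro t t' h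
    have := congrArg Fin.val h
    simp only [win12] at this
    omega
  · intros; exact mul_comm _ _

variable [Algebra ℂ A]

theorem liftC_mul {k : ℕ} (X Y : TMat N k ℂ) : liftC A (X * Y) = liftC A X * liftC A Y :=
  Matrix.map_mul

theorem liftC_one {k : ℕ} : liftC A (1 : TMat N k ℂ) = 1 := by
  simp [liftC]

theorem liftC_embG {m k : ℕ} (e : Fin m → Fin k) (X : TMat N m ℂ) :
    liftC A (embG e X) = embG e (liftC A X) := by
  ext f g
  simp only [liftC, embG, Matrix.map_apply]
  split_ifs <;> simp

theorem emb1_far (k j : ℕ) (h0 : 0 < j) (hj : j + 1 < k) (R : RMat N)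
    (M : Matrix (Fin N) (Fin N) A) : Commute (liftC A (embR k R j)) (emb1 k M) := by
  have h2 := embR_eq_win k j 2 0 (by omega) (by omega) R
  rw [add_zero] at h2
  rw [emb1_eq_win k 1 (by omega) (by omega) M, h2, liftC_embG]
  apply embG_commute
  · intro t t' h
    have := congrArg Fin.val h
    simp only [win12] at this
    omega
  · intro a b c d
    exact Algebra.commutes _ _

theorem emb1_RE (k : ℕ) (hk : 1 < k) (R : RMat N) (M : Matrix (Fin N) (Fin N) A)
    (h : RERel R M) :
    liftC A (embR k R 0) * emb1 k M * liftC A (embR k R 0) * emb1 k M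
      = emb1 k M * liftC A (embR k R 0) * emb1 k M * liftC A (embR k R 0) := by
  have h1 := embR_eq_win k 0 2 0 (by omega) (by omega) R
  rw [add_zero] at h1
  rw [emb1_eq_win k 2 (by omega) (by omega) M, h1, liftC_embG]
  simp only [← embG_mul _ (win12_inj _ _ _ _)]
  rw [h]

theorem Asym_comm (k : ℕ) (R : RMat N) (q : ℂ) (Y : TMat N k A)
    (h : ∀ i, i + 1 < k → Commute (liftC A (embR k R i)) Y) :
    ∀ n, n ≤ k → Commute (liftC A (Asym k R q n)) Y := by
  have hs : ∀ (c : ℂ) (X : TMat N k ℂ), liftC A (c • X) = c • liftC A X := by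
    intro c X
    ext f g
    simp only [liftC, Matrix.map_apply, Matrix.smul_apply, smul_eq_mul, map_mul, Algebra.smul_def (A := A)]
  have hsub : ∀ X X' : TMat N k ℂ, liftC A (X - X') = liftC A X - liftC A X' := by
    intro X X'
    ext f g
    simp [liftC]
  intro n
  induction n with
  | zero => intro _; simp only [Asym, liftC_one]; exact Commute.one_left _
  | succ n ih =>
    intro hn
    cases n with
    | zero => simp only [Asym, liftC_one]; exact Commute.one_left _
    | succ j =>
      have h1 := ih (by omega)
      simp only [Asym, liftC_mul, hs, hsub, liftC_one]
      refine Commute.smul_left ((h1.mul_left (Commute.sub_left ?_ ?_)).mul_left h1) _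
      · exact (Commute.one_left _).smul_left _
      · exact (h j (by omega)).smul_left _

end Embed12

/-- the skew-symmetrizer commutes with the chain of copies of `M`:
`A^(k) M_{1̄} M_{2̄} ⋯ M_{k̄} = M_{1̄} M_{2̄} ⋯ M_{k̄} A^(k)`. -/
theorem statement12 {N : ℕ} (R Rinv : RMat N) (q : ℂ) (k : ℕ)
    (hq0 : q ≠ 0) (hq1 : q ≠ 1) (hqm1 : q ≠ -1)
    (hinv : R * Rinv = 1) (hinv' : Rinv * R = 1)
    (hbr : IsBraiding R) (hH : HeckeCond R q)
    (hqk : ∀ j : ℕ, 2 ≤ j → j ≤ k → qNum q j ≠ 0)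
    {A : Type _} [Ring A] [Algebra ℂ A]
    (M : Matrix (Fin N) (Fin N) A) (hRE : RERel R M) :
    liftC A (Asym k R q k) * upChain k R Rinv M k
      = upChain k R Rinv M k * liftC A (Asym k R q k) := by
  refine (Asym_comm k R q _ ?_ k le_rfl).eq
  have hu : ∀ i, ∃ u : (TMat N k A)ˣ, i + 1 < k →
      (u : TMat N k A) = liftC A (embR k R i) ∧
      ((u⁻¹ : (TMat N k A)ˣ) : TMat N k A) = liftC A (embR k Rinv i) := by
    intro i
    by_cases hi : i + 1 < k
    · refine ⟨⟨liftC A (embR k R i), liftC A (embR k Rinv i), ?_, ?_⟩, fun _ => ⟨rfl, rfl⟩⟩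
      · rw [← liftC_mul, embR_mul_inv k i hi _ _ hinv, liftC_one]
      · rw [← liftC_mul, embR_mul_inv k i hi _ _ hinv', liftC_one]
    · exact ⟨1, fun h => absurd h hi⟩
  choose r hr using hu
  have main := chain_comm12 k r (copyX k R Rinv M) ?_ ?_ ?_ ?_ ?_ k le_rfl
  · intro i hi
    rw [← (hr i hi).1]
    exact main i hi
  · intro i hi
    rw [(hr i hi).1, (hr i hi).2]
    rfl
  · intro i hi
    ext1
    simp only [Units.val_mul]
    rw [(hr i (by omega)).1, (hr (i + 1) (by omega)).1]
    simp only [← liftC_mul]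
    rw [embR_braid k i hi R hbr]
  · intro i j hij hj
    rw [(hr i (by omega)).1, (hr j (by omega)).1]
    change _ * _ = _ * _
    rw [← liftC_mul, ← liftC_mul, (embR_far k i j hij hj R).eq]
  · intro j h0 hj
    rw [(hr j hj).1]
    exact emb1_far k j h0 hj R M
  · intro hk
    rw [(hr 0 (by omega)).1]
    exact emb1_RE k hk R M hRE
end
end

section
/- Let R be a Hecke symmetry with parameter q such that j_q ≠ 0 for 2 ≤ j ≤ k, and let D be an N×N matrix with entries in a unital associative ℂ-algebra 𝒜 satisfying R⁻¹ D₁ R⁻¹ D₁ = D₁ R⁻¹ D₁ R⁻¹. Then the R-skew-symmetrizer commutes with the reversed chain of copies of D: A^(k) D_{k̄} D_{k̄−1} ⋯ D_{1̄} = D_{k̄} D_{k̄−1} ⋯ D_{1̄} A^(k), as N^k×N^k matrices over 𝒜. -/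
open Matrix BigOperators

noncomputable section

section AbstractPart

variable {M : Type*} [Monoid M]

theorem aux_conj {U : Mˣ} {a b x y : M} (hab : SemiconjBy (U : M) a b)
    (hxy : SemiconjBy (U : M) x y) (h : Commute a x) : Commute b y := by
  have h1 : SemiconjBy (U : M) (a * x) (b * y) := hab.mul_right hxy
  have h2 : SemiconjBy (U : M) (x * a) (y * b) := hxy.mul_right hab
  have h3 : (b * y) * (U : M) = (y * b) * U := by
    rw [← h1.eq, ← h2.eq, h.eq]
  exact U.mul_left_inj.mp h3

structure AuxData (k : ℕ) (r : ℕ → Mˣ) (d : ℕ → M) : Prop where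
  hd : ∀ i, d (i + 1) = (r i : M) * d i * ((r i)⁻¹ : Mˣ)
  far : ∀ i j, i + 2 ≤ j → Commute (r i : M) (r j)
  braid : ∀ i, i + 2 < k →
    (r i : M) * r (i + 1) * r i = r (i + 1) * r i * r (i + 1)
  d0 : ∀ i, 1 ≤ i → Commute (d 0) (r i)
  base : 1 < k → Commute (r 0 : M) (d 0 * ((r 0)⁻¹ : Mˣ) * d 0)

variable {k : ℕ} {r : ℕ → Mˣ} {d : ℕ → M}

theorem AuxData.up (H : AuxData k r d) : ∀ i j, i < j → Commute (d i) (r j)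
  | 0, j, h => H.d0 j h
  | i + 1, j, h => by
    have h1 := H.up i j (by omega)
    have h2 := H.far i j (by omega)
    rw [H.hd]
    exact (h2.mul_left h1).mul_left (Commute.units_inv_left h2)

theorem AuxData.down (H : AuxData k r d) (i : ℕ) :
    ∀ j, i + 2 ≤ j → j < k → Commute (d j) (r i) := by
  intro j hj
  induction j, hj using Nat.le_induction with
  | base =>
    intro hk
    have hb := H.braid i hk
    have h1 := H.up i (i + 1) (by omega)
    have e : d (i + 2) = ((r (i + 1) * r i : Mˣ) : M) * d i * ((r (i + 1) * r i)⁻¹ : Mˣ) := by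
      rw [H.hd, H.hd]; simp [mul_assoc]
    have hU : SemiconjBy ((r (i + 1) * r i : Mˣ) : M) (r (i + 1)) (r i) := by
      simp only [SemiconjBy, Units.val_mul]
      rw [← hb, mul_assoc]
    have hd : SemiconjBy ((r (i + 1) * r i : Mˣ) : M) (d i) (d (i + 2)) := by
      simp only [SemiconjBy]
      rw [e, Units.inv_mul_cancel_right]
    exact aux_conj hd hU h1
  | succ j hj ih =>
    intro hk
    have h1 := ih (by omega)
    have h2 := (H.far i j hj).symm
    rw [H.hd]
    exact (h2.mul_left h1).mul_left (Commute.units_inv_left h2)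

theorem AuxData.rel (H : AuxData k r d) :
    ∀ i, i + 1 < k → Commute (r i : M) (d i * ((r i)⁻¹ : Mˣ) * d i)
  | 0, h => H.base h
  | i + 1, h => by
    have ih := H.rel i (by omega)
    have hb := H.braid i h
    have h1 := H.up i (i + 1) (by omega)
    have hU : SemiconjBy ((r i * r (i + 1) : Mˣ) : M) (r i) (r (i + 1)) := by
      simp only [SemiconjBy, Units.val_mul]
      rw [hb, mul_assoc]
    have hd : SemiconjBy ((r i * r (i + 1) : Mˣ) : M) (d i) (d (i + 1)) := by
      simp only [SemiconjBy, Units.val_mul]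
      rw [H.hd, mul_assoc, ← h1.eq]
      simp [mul_assoc]
    have hUi : SemiconjBy ((r i * r (i + 1) : Mˣ) : M) ((r i)⁻¹ : Mˣ) ((r (i + 1))⁻¹ : Mˣ) :=
      hU.units_inv_right
    exact aux_conj hU ((hd.mul_right hUi).mul_right hd) ih

theorem AuxData.pair (H : AuxData k r d) (i : ℕ) (h : i + 1 < k) :
    Commute (r i : M) (d (i + 1) * d i) := by
  have h1 := H.rel i h
  have : d (i + 1) * d i = r i * (d i * ((r i)⁻¹ : Mˣ) * d i) := by
    rw [H.hd]; simp [mul_assoc]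
  rw [this]
  exact (Commute.refl _).mul_right h1

theorem AuxData.chain (H : AuxData k r d) (P : ℕ → M) (P0 : P 0 = 1)
    (PS : ∀ n, P (n + 1) = d n * P n) (i : ℕ) (h : i + 1 < k) : Commute (r i : M) (P k) := by
  have low : ∀ n, n ≤ i → Commute (r i : M) (P n) := by
    intro n
    induction n with
    | zero => intro _; rw [P0]; exact Commute.one_right _
    | succ n ih =>
      intro hn
      rw [PS]
      exact (H.up n i hn).symm.mul_right (ih (by omega))
  have high : ∀ n, i + 2 ≤ n → n ≤ k → Commute (r i : M) (P n) := by
    intro n hn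
    induction n, hn using Nat.le_induction with
    | base =>
      intro _
      rw [PS, PS, ← mul_assoc]
      exact (H.pair i h).mul_right (low i le_rfl)
    | succ n hn ih =>
      intro hk
      rw [PS]
      exact (H.down i n hn (by omega)).symm.mul_right (ih (by omega))
  exact high k h le_rfl

end AbstractPart

section LocalPart

variable {N k : ℕ} {B : Type*} [Ring B]

structure IsLoc (P : TMat N k B) (S : Fin k → Prop) : Prop where
  zero : ∀ f g, (∃ j, ¬ S j ∧ f j ≠ g j) → P f g = 0
  eq : ∀ f g f' g', (∀ j, S j → f j = f' j) → (∀ j, S j → g j = g' j) →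
    (∀ j, ¬ S j → f j = g j) → (∀ j, ¬ S j → f' j = g' j) → P f g = P f' g'

theorem IsLoc.mul_apply {P Q : TMat N k B} {S T : Fin k → Prop} [DecidablePred S]
    (hP : IsLoc P S) (hQ : IsLoc Q T) (hST : ∀ j, S j → ¬ T j) (f g : Fin k → Fin N) :
    (P * Q) f g = P f (fun j => if S j then g j else f j) *
      Q (fun j => if S j then g j else f j) g := by
  rw [Matrix.mul_apply]
  apply Finset.sum_eq_single
  · intro h _ hne
    by_cases h1 : ∃ j, ¬ S j ∧ f j ≠ h j
    · rw [hP.zero _ _ h1, zero_mul]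
    · by_cases h2 : ∃ j, ¬ T j ∧ h j ≠ g j
      · rw [hQ.zero _ _ h2, mul_zero]
      · exfalso
        push Not at h1 h2
        apply hne
        funext j
        by_cases hj : S j
        · simp [hj, h2 j (hST j hj)]
        · simp [hj, h1 j hj]
  · intro h; exact absurd (Finset.mem_univ _) h

theorem IsLoc.commute {P Q : TMat N k B} {S T : Fin k → Prop}
    (hP : IsLoc P S) (hQ : IsLoc Q T) (hST : ∀ j, S j → ¬ T j)
    (hc : ∀ f g f' g', Commute (P f g) (Q f' g')) : Commute P Q := by
  classical
  have hTS : ∀ j, T j → ¬ S j := fun j h h' => hST j h' h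
  show P * Q = Q * P
  ext f g
  rw [hP.mul_apply hQ hST, hQ.mul_apply hP hTS]
  by_cases h : ∀ j, ¬ S j → ¬ T j → f j = g j
  · rw [(hc _ _ _ _).eq]
    congr 1
    · apply hQ.eq
      · intro j hj; simp [hTS j hj]
      · intro j hj; simp [hj]
      · intro j hj
        by_cases hs : S j
        · simp [hs]
        · simp [hs, h j hs hj]
      · intro j hj; simp [hj]
    · apply hP.eq
      · intro j hj; simp [hST j hj]
      · intro j hj; simp [hj]
      · intro j hj; simp [hj]
      · intro j hj
        by_cases hs : T j
        · simp [hs]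
        · simp [hs, h j hj hs]
  · push Not at h
    obtain ⟨j, h1, h2, h3⟩ := h
    rw [hQ.zero (fun j => if S j then g j else f j) g ⟨j, h2, by simpa [h1] using h3⟩,
      hP.zero (fun j => if T j then g j else f j) g ⟨j, h1, by simpa [h2] using h3⟩]
    simp

end LocalPart

section EmbPart

variable {N k m : ℕ} {B : Type*} [Ring B]

def splitFun (N : ℕ) (e : Fin m → Fin k) (f : Fin k → Fin N) :
    (Fin m → Fin N) × ({j : Fin k // ∀ a, e a ≠ j} → Fin N) :=
  (fun a => f (e a), fun j => f j.1)

theorem splitFun_bij (e : Fin m → Fin k) (he : Function.Injective e) :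
    Function.Bijective (splitFun N e) := by
  classical
  constructor
  · intro f g h
    have h1 := congrArg Prod.fst h
    have h2 := congrArg Prod.snd h
    funext j
    by_cases hj : ∃ a, e a = j
    · obtain ⟨a, rfl⟩ := hj
      exact congrFun h1 a
    · push Not at hj
      exact congrFun h2 ⟨j, hj⟩
  · rintro ⟨u, v⟩
    refine ⟨fun j => if h : ∃ a, e a = j then u h.choose else
      v ⟨j, by push Not at h; exact h⟩, ?_⟩
    apply Prod.ext
    · funext a
      have h : ∃ b, e b = e a := ⟨a, rfl⟩
      simp only [splitFun, dif_pos h]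
      exact congrArg u (he h.choose_spec)
    · funext j
      have h : ¬ ∃ b, e b = j.1 := by push Not; exact j.2
      simp only [splitFun, dif_neg h]

def embE (e : Fin m → Fin k) (X : TMat N m B) : TMat N k B :=
  (Matrix.blockDiagonal (fun _ => X)).submatrix (splitFun N e) (splitFun N e)

theorem embE_mul (e : Fin m → Fin k) (he : Function.Injective e) (X Y : TMat N m B) :
    embE e (X * Y) = embE e X * embE e Y := by
  have h := Matrix.submatrix_mul_equiv (Matrix.blockDiagonal (fun _ => X))
    (Matrix.blockDiagonal (fun _ => Y)) (splitFun N e)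
    (Equiv.ofBijective _ (splitFun_bij (N := N) e he)) (splitFun N e)
  rw [← Matrix.blockDiagonal_mul] at h
  exact h.symm

theorem embE_apply (e : Fin m → Fin k) (X : TMat N m B) (f g : Fin k → Fin N) :
    embE e X f g = if ∀ j, (∀ a, e a ≠ j) → f j = g j then
      X (fun a => f (e a)) (fun a => g (e a)) else 0 := by
  simp only [embE, Matrix.submatrix_apply, Matrix.blockDiagonal_apply, splitFun, funext_iff,
    Subtype.forall]

def shiftE (m k i : ℕ) (h : i + m ≤ k) : Fin m → Fin k := fun a => ⟨i + a.1, by omega⟩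

theorem shiftE_inj (m k i : ℕ) (h : i + m ≤ k) : Function.Injective (shiftE m k i h) := by
  intro a b hab
  simp only [shiftE, Fin.mk.injEq] at hab
  exact Fin.ext (by omega)

theorem shiftE_ne (m k i : ℕ) (h : i + m ≤ k) (j : Fin k) :
    (∀ a, shiftE m k i h a ≠ j) ↔ (j.1 < i ∨ i + m ≤ j.1) := by
  constructor
  · intro H
    by_contra hc
    exact H ⟨j.1 - i, by omega⟩ (Fin.ext (by simp [shiftE]; omega))
  · intro H a ha
    have := congrArg Fin.val ha
    simp only [shiftE] at this
    omega

theorem embE_embR (m k i t : ℕ) (h : i + m ≤ k) (ht : t + 1 < m) (R : RMat N) :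
    embE (shiftE m k i h) (embR m R t) = embR k R (i + t) := by
  ext f g
  rw [embE_apply]
  have hk : i + t + 1 < k := by omega
  simp only [embR, dif_pos ht, dif_pos hk, shiftE_ne]
  refine (ite_and _ _ _ _).symm.trans (if_congr ?_ rfl rfl)
  constructor
  · rintro ⟨h1, h2⟩ j hj hj'
    by_cases hh : j.1 < i ∨ i + m ≤ j.1
    · exact h1 j hh
    · have := h2 ⟨j.1 - i, by omega⟩ (by simp; omega) (by simp; omega)
      have e : (⟨i + (j.1 - i), by omega⟩ : Fin k) = j := Fin.ext (by simp; omega)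
      simpa only [shiftE, e] using this
  · intro H
    exact ⟨fun j hj => H j (by omega) (by omega),
      fun j hj hj' => H _ (by simp only [shiftE]; omega) (by simp only [shiftE]; omega)⟩

theorem embE_emb1 (m k : ℕ) (h : 0 + m ≤ k) (hm : 0 < m) (X : Matrix (Fin N) (Fin N) B) :
    embE (shiftE m k 0 h) (emb1 m X) = emb1 k X := by
  ext f g
  rw [embE_apply]
  have hk : 0 < k := by omega
  simp only [emb1, dif_pos hm, dif_pos hk, shiftE_ne]
  refine (ite_and _ _ _ _).symm.trans (if_congr ?_ rfl rfl)
  constructor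
  · rintro ⟨h1, h2⟩ j hj
    by_cases hh : j.1 < 0 ∨ 0 + m ≤ j.1
    · exact h1 j hh
    · have := h2 ⟨j.1 - 0, by omega⟩ (by simp; omega)
      have e : (⟨0 + (j.1 - 0), by omega⟩ : Fin k) = j := Fin.ext (by simp)
      simpa only [shiftE, e] using this
  · intro H
    exact ⟨fun j hj => H j (by omega), fun j hj => H _ (by simp only [shiftE]; omega)⟩

theorem embE_lift {A : Type*} [Ring A] [Algebra ℂ A] (e : Fin m → Fin k) (X : TMat N m ℂ) :
    liftC A (embE e X) = embE e (liftC A X) := by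
  ext f g
  simp only [liftC, Matrix.map_apply, embE_apply]
  split_ifs <;> simp

theorem lift_mul {A : Type*} [Ring A] [Algebra ℂ A] (X Y : TMat N k ℂ) :
    liftC A (X * Y) = liftC A X * liftC A Y := by
  simp [liftC, Matrix.map_mul]

theorem lift_one {A : Type*} [Ring A] [Algebra ℂ A] :
    liftC A (1 : TMat N k ℂ) = 1 := by
  simp [liftC]

theorem embR_two (R : RMat N) :
    embR 2 R 0 = R.submatrix (finTwoArrowEquiv (Fin N)) (finTwoArrowEquiv (Fin N)) := by
  ext f g
  have : ∀ j : Fin 2, j.val ≠ 0 → j.val ≠ 0 + 1 → f j = g j := by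
    intro j h1 h2; omega
  simp only [embR, Matrix.submatrix_apply]
  rw [dif_pos (by norm_num), if_pos this]
  rfl

theorem embR_big (i : ℕ) (h : ¬ i + 1 < k) (R : RMat N) : embR k R i = 1 := by
  ext f g
  simp [embR, h]

theorem embR_inv (i : ℕ) (R Rinv : RMat N) (hinv : R * Rinv = 1) :
    embR k R i * embR k Rinv i = 1 := by
  by_cases h : i + 1 < k
  · have h2 : embR 2 R 0 * embR 2 Rinv 0 = 1 := by
      rw [embR_two, embR_two, Matrix.submatrix_mul_equiv, hinv, Matrix.submatrix_one_equiv]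
    have e := embE_mul (shiftE 2 k i (by omega)) (shiftE_inj _ _ _ _) (embR 2 R 0) (embR 2 Rinv 0)
    rw [embE_embR 2 k i 0 _ (by norm_num), embE_embR 2 k i 0 _ (by norm_num), h2] at e
    rw [add_zero] at e
    rw [← e]
    unfold embE
    have hb : (Matrix.blockDiagonal (fun _ : {j : Fin k // ∀ a, shiftE 2 k i (by omega) a ≠ j} →
        Fin N => (1 : TMat N 2 ℂ))) = 1 := Matrix.blockDiagonal_one
    rw [hb]
    exact Matrix.submatrix_one_equiv (Equiv.ofBijective _ (splitFun_bij (N := N) _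
      (shiftE_inj 2 k i (by omega))))
  · simp [embR_big i h]

theorem embR_loc {A : Type*} [Ring A] [Algebra ℂ A] (i : ℕ) (h : i + 1 < k) (R : RMat N) :
    IsLoc (liftC A (embR k R i)) (fun j => j.1 = i ∨ j.1 = i + 1) := by
  constructor
  · rintro f g ⟨j, hj, hne⟩
    simp only [liftC, Matrix.map_apply, embR, dif_pos h]
    rw [if_neg, map_zero]
    intro H
    exact hne (H j (by tauto) (by tauto))
  · intro f g f' g' h1 h2 h3 h4
    simp only [liftC, Matrix.map_apply, embR, dif_pos h]
    rw [if_pos (fun j a b => h3 j (by tauto)), if_pos (fun j a b => h4 j (by tauto)),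
      h1 _ (Or.inl rfl), h1 _ (Or.inr rfl), h2 _ (Or.inl rfl), h2 _ (Or.inr rfl)]

theorem emb1_loc (h : 0 < k) (X : Matrix (Fin N) (Fin N) B) :
    IsLoc (emb1 k X) (fun j => j.1 = 0) := by
  constructor
  · rintro f g ⟨j, hj, hne⟩
    simp only [emb1, dif_pos h]
    rw [if_neg]
    intro H
    exact hne (H j hj)
  · intro f g f' g' h1 h2 h3 h4
    simp only [emb1, dif_pos h]
    rw [if_pos (fun j a => h3 j a), if_pos (fun j a => h4 j a),
      h1 _ rfl, h2 _ rfl]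

theorem asym_comm {A : Type*} [Ring A] [Algebra ℂ A] (R : RMat N) (q : ℂ) (X : TMat N k A)
    (hX : ∀ i, Commute (liftC A (embR k R i)) X) :
    ∀ j, Commute (liftC A (Asym k R q j)) X
  | 0 => by rw [Asym, lift_one]; exact Commute.one_left _
  | 1 => by rw [Asym, lift_one]; exact Commute.one_left _
  | j + 2 => by
    have ih := asym_comm R q X hX (j + 1)
    have hs : ∀ (c : ℂ) (Y : TMat N k ℂ), liftC A (c • Y) = c • liftC A Y := by
      intro c Y
      ext f g
      simp only [liftC, Matrix.map_apply, Matrix.smul_apply, smul_eq_mul, map_mul]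
      rw [Algebra.smul_def]
    have hsub : ∀ (Y Z : TMat N k ℂ), liftC A (Y - Z) = liftC A Y - liftC A Z := by
      intro Y Z
      ext f g
      simp [liftC]
    rw [Asym, hs, lift_mul, lift_mul, hsub, hs, hs, lift_one]
    refine Commute.smul_left ((ih.mul_left ?_).mul_left ih) _
    exact ((Commute.one_left X).smul_left _).sub_left ((hX j).smul_left _)

end EmbPart

/-- the skew-symmetrizer commutes with the reversed chain of
copies of `D`:  `A^(k) D_{k̄} D_{\overline{k−1}} ⋯ D_{1̄} = D_{k̄} D_{\overline{k−1}} ⋯ D_{1̄} A^(k)`. -/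
theorem statement13 {N : ℕ} (R Rinv : RMat N) (q : ℂ) (k : ℕ)
    (hq0 : q ≠ 0) (hq1 : q ≠ 1) (hqm1 : q ≠ -1)
    (hinv : R * Rinv = 1) (hinv' : Rinv * R = 1)
    (hbr : IsBraiding R) (hH : HeckeCond R q)
    (hqk : ∀ j : ℕ, 2 ≤ j → j ≤ k → qNum q j ≠ 0)
    {A : Type _} [Ring A] [Algebra ℂ A]
    (D : Matrix (Fin N) (Fin N) A) (hDD : DDRel Rinv D) :
    liftC A (Asym k R q k) * downChain k R Rinv D k
      = downChain k R Rinv D k * liftC A (Asym k R q k) := by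
  have h1 : ∀ i, liftC A (embR k R i) * liftC A (embR k Rinv i) = 1 := fun i => by
    rw [← lift_mul, embR_inv i R Rinv hinv, lift_one]
  have h2 : ∀ i, liftC A (embR k Rinv i) * liftC A (embR k R i) = 1 := fun i => by
    rw [← lift_mul, embR_inv i Rinv R hinv', lift_one]
  let r : ℕ → (TMat N k A)ˣ := fun i => ⟨liftC A (embR k R i), liftC A (embR k Rinv i), h1 i, h2 i⟩
  have H : AuxData k r (copyX k R Rinv D) := by
    refine ⟨fun i => rfl, ?_, ?_, ?_, ?_⟩
    · intro i j hij
      show Commute (liftC A (embR k R i)) (liftC A (embR k R j))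
      by_cases hj : j + 1 < k
      · refine (embR_loc i (by omega) R).commute (embR_loc j hj R) (fun a ha => by omega) ?_
        intro f g f' g'
        exact Algebra.commute_algebraMap_left _ _
      · rw [embR_big j hj, lift_one]; exact Commute.one_right _
    · intro i hi
      show liftC A (embR k R i) * liftC A (embR k R (i + 1)) * liftC A (embR k R i) =
        liftC A (embR k R (i + 1)) * liftC A (embR k R i) * liftC A (embR k R (i + 1))
      simp only [← lift_mul]
      congr 1
      have e := congrArg (embE (shiftE 3 k i (by omega))) hbr
      simp only [embE_mul _ (shiftE_inj _ _ _ _)] at e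
      rw [embE_embR 3 k i 0 _ (by norm_num), embE_embR 3 k i 1 _ (by norm_num)] at e
      exact e
    · intro i hi
      show Commute (emb1 k D) (liftC A (embR k R i))
      by_cases hj : i + 1 < k
      · refine (emb1_loc (by omega) D).commute (embR_loc i hj R) (fun a ha => by omega) ?_
        intro f g f' g'
        exact Algebra.commute_algebraMap_right _ _
      · rw [embR_big i hj, lift_one]; exact Commute.one_right _
    · intro hk
      have e := congrArg (embE (shiftE 2 k 0 (by omega))) hDD
      simp only [embE_mul _ (shiftE_inj _ _ _ _), ← embE_lift] at e
      rw [embE_embR 2 k 0 0 _ (by norm_num), embE_emb1 2 k _ (by norm_num)] at e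
      have hc : Commute (((r 0)⁻¹ : (TMat N k A)ˣ) : TMat N k A)
          (emb1 k D * ((r 0)⁻¹ : (TMat N k A)ˣ) * emb1 k D) := by
        show liftC A (embR k Rinv 0) * (emb1 k D * liftC A (embR k Rinv 0) * emb1 k D) =
          (emb1 k D * liftC A (embR k Rinv 0) * emb1 k D) * liftC A (embR k Rinv 0)
        rw [← e]
        simp only [mul_assoc]
      exact Commute.units_inv_left_iff.mp hc
  refine asym_comm R q _ ?_ k
  intro i
  by_cases hi : i + 1 < k
  · refine H.chain (downChain k R Rinv D) ?_ ?_ i hi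
    · simp [downChain]
    · intro n
      simp [downChain, List.range_succ]
  · rw [embR_big i hi, lift_one]; exact Commute.one_left _
end
end
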